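/- Let T ≥ 2, τ ∈ {1,…,T}, z ∈ {1,…,τ−1}, α ∈ [0,1]. Suppose the file F, local randomness R with H(R) = ρ, and shares M_1,…,M_T (each M_t a deterministic function of (F,R)) satisfy recoverability and (α,z)-privacy (no leakage symmetry is assumed). Then ρ ≥ (max(0, z − τα)/(τ−z))·H(F). -/

import Mathlib

/-!
Write `h S = H(M_S)`.  Fix a set `A` of `τ` servers.  Since `F` is a function of `M_A` and
`M_A` is a function of `(F, R)`, we have `h A = H(F, M_A) ≤ H(F, R) = H(F) + ρ`.  For `S ⊆ A` with
`|S| = z`, privacy gives `(1 - α) H(F) ≤ H(F | M_S) ≤ H(M_A | M_S) = h A - h S`.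
Entropy is submodular (`ent_submod`), so the Han-type inequality
`∑_{a ∈ A} (h A - h (A \ a)) ≤ h A` (`sum_marginal_le`) lets one delete elements of `A` one at a
time without decreasing `h S / |S|`; hence some `S ⊆ A` of size `z` has `z · h A ≤ τ · h S`
(`exists_subset_ratio`).  For that `S`,
`τ (1 - α) H(F) ≤ (τ - z) h A ≤ (τ - z) (H(F) + ρ)`, which rearranges to the bound.

The entropy inequalities are derived from the pointwise formula
`H(X) = -∑ ω, p ω * log (P (X = X ω))` (`ent_eq`), which depends on `X` only through the
partition of the sample space it induces.
-/

open scoped BigOperators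
open Classical

noncomputable section

/-- Probability of an event `A` under the probability mass function `p` on a finite
sample space `Ω`. -/
def prb {Ω : Type} [Fintype Ω] (p : Ω → ℝ) (A : Set Ω) : ℝ :=
  ∑ ω, if ω ∈ A then p ω else 0

/-- Shannon entropy (in bits, base-2 logarithm) of a random variable `X` defined on a
finite sample space with probability mass function `p`, with the convention
`0 * log 0 = 0`. -/
def ent {Ω V : Type} [Fintype Ω] [Fintype V] (p : Ω → ℝ) (X : Ω → V) : ℝ :=
  -∑ v, prb p {ω | X ω = v} * Real.logb 2 (prb p {ω | X ω = v})

/-- Conditional Shannon entropy `H(X | Y) = H(X, Y) - H(Y)`. -/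
def condEnt {Ω V W : Type} [Fintype Ω] [Fintype V] [Fintype W]
    (p : Ω → ℝ) (X : Ω → V) (Y : Ω → W) : ℝ :=
  ent p (fun ω => (X ω, Y ω)) - ent p Y

/-- Mutual information `I(X ; Y) = H(X) + H(Y) - H(X, Y)`. -/
def mutInf {Ω V W : Type} [Fintype Ω] [Fintype V] [Fintype W]
    (p : Ω → ℝ) (X : Ω → V) (Y : Ω → W) : ℝ :=
  ent p X + ent p Y - ent p (fun ω => (X ω, Y ω))

/-- The tuple of shares `M_S = (M_t)_{t ∈ S}` viewed as a single random variable. -/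
def shares {Ω : Type} {T : ℕ} {χ : Fin T → Type} (M : ∀ t, Ω → χ t)
    (S : Finset (Fin T)) : Ω → (∀ t : S, χ t.1) :=
  fun ω t => M t.1 ω

section Helpers

variable {Ω : Type} [Fintype Ω] {p : Ω → ℝ}

lemma prb_nonneg (hp0 : ∀ ω, 0 ≤ p ω) (A : Set Ω) : 0 ≤ prb p A := by
  unfold prb
  exact Finset.sum_nonneg fun ω _ => by split_ifs <;> simp [hp0]

lemma prb_mono (hp0 : ∀ ω, 0 ≤ p ω) {A B : Set Ω} (h : A ⊆ B) : prb p A ≤ prb p B := by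
  unfold prb
  refine Finset.sum_le_sum fun ω _ => ?_
  by_cases hA : ω ∈ A
  · simp [hA, h hA]
  · by_cases hB : ω ∈ B <;> simp [hA, hB, hp0]

lemma prb_pos (hp0 : ∀ ω, 0 ≤ p ω) {A : Set Ω} {ω : Ω} (h : ω ∈ A) (hω : 0 < p ω) :
    0 < prb p A := by
  unfold prb
  refine Finset.sum_pos' (fun ω _ => by split_ifs <;> simp [hp0]) ⟨ω, Finset.mem_univ _, ?_⟩
  simpa [h] using hω

lemma sum_prb_inter {V : Type} [Fintype V] (X : Ω → V) (A : Set Ω) :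
    ∑ v, prb p {ω | X ω = v ∧ ω ∈ A} = prb p A := by
  unfold prb
  rw [Finset.sum_comm]
  refine Finset.sum_congr rfl fun ω _ => ?_
  by_cases hA : ω ∈ A <;> simp [hA]

lemma sum_prb {V : Type} [Fintype V] (hp1 : ∑ ω, p ω = 1) (X : Ω → V) :
    ∑ v, prb p {ω | X ω = v} = 1 := by
  have := sum_prb_inter (p := p) X Set.univ
  simp only [Set.mem_univ, and_true] at this
  rw [this]
  simpa [prb] using hp1

/-- The law of the unconscious statistician. -/
lemma sum_comp {V : Type} [Fintype V] (X : Ω → V) (g : V → ℝ) :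
    ∑ ω, p ω * g (X ω) = ∑ v, prb p {ω | X ω = v} * g v := by
  unfold prb
  simp_rw [Finset.sum_mul]
  rw [Finset.sum_comm]
  refine Finset.sum_congr rfl fun ω _ => ?_
  simp [ite_mul]

lemma ent_eq {V : Type} [Fintype V] (X : Ω → V) :
    ent p X = -∑ ω, p ω * Real.logb 2 (prb p {ω' | X ω' = X ω}) := by
  unfold ent
  rw [sum_comp X (fun v => Real.logb 2 (prb p {ζ | X ζ = v}))]

/-- Entropy does not increase under coarsening: `Y` is a function of `X` on the sample space. -/
lemma ent_le {V W : Type} [Fintype V] [Fintype W] (hp0 : ∀ ω, 0 ≤ p ω) (X : Ω → V) (Y : Ω → W)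
    (h : ∀ ω ω', X ω = X ω' → Y ω = Y ω') : ent p Y ≤ ent p X := by
  rw [ent_eq, ent_eq, neg_le_neg_iff]
  refine Finset.sum_le_sum fun ω _ => ?_
  rcases (hp0 ω).eq_or_lt with h0 | h0
  · simp [← h0]
  · refine mul_le_mul_of_nonneg_left ?_ h0.le
    exact Real.logb_le_logb_of_le one_lt_two (prb_pos hp0 (by simp) h0)
      (prb_mono hp0 fun ω' hω' => h _ _ hω')

lemma ent_congr {V W : Type} [Fintype V] [Fintype W] (hp0 : ∀ ω, 0 ≤ p ω) (X : Ω → V) (Y : Ω → W)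
    (h : ∀ ω ω', X ω = X ω' ↔ Y ω = Y ω') : ent p X = ent p Y :=
  le_antisymm (ent_le hp0 _ _ fun _ _ => (h _ _).2) (ent_le hp0 _ _ fun _ _ => (h _ _).1)

lemma ent_const {V : Type} [Fintype V] (hp1 : ∑ ω, p ω = 1) (X : Ω → V)
    (h : ∀ ω ω', X ω = X ω') : ent p X = 0 := by
  rw [ent_eq]
  have : ∀ ω, prb p {ω' | X ω' = X ω} = 1 := fun ω => by
    simp [prb, h _ ω, hp1]
  simp [this]

lemma ent_nonneg {V : Type} [Fintype V] (hp0 : ∀ ω, 0 ≤ p ω) (hp1 : ∑ ω, p ω = 1) (X : Ω → V) :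
    0 ≤ ent p X := by
  rw [← ent_const hp1 (fun _ : Ω => ()) fun _ _ => rfl]
  exact ent_le hp0 _ _ fun _ _ _ => rfl

lemma ent_indep {V W : Type} [Fintype V] [Fintype W] (hp0 : ∀ ω, 0 ≤ p ω) (X : Ω → V) (Y : Ω → W)
    (h : ∀ x y, prb p {ω | X ω = x ∧ Y ω = y} = prb p {ω | X ω = x} * prb p {ω | Y ω = y}) :
    ent p (fun ω => (X ω, Y ω)) = ent p X + ent p Y := by
  rw [ent_eq, ent_eq, ent_eq, ← neg_add, ← Finset.sum_add_distrib]
  congr 1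
  refine Finset.sum_congr rfl fun ω _ => ?_
  rcases (hp0 ω).eq_or_lt with h0 | h0
  · simp [← h0]
  · simp only [Prod.mk.injEq]
    rw [h, Real.logb_mul (prb_pos hp0 (by simp) h0).ne' (prb_pos hp0 (by simp) h0).ne', mul_add]

/-- Submodularity `H(X, Y, Z) + H(Z) ≤ H(X, Z) + H(Y, Z)`, i.e. `I(X; Y | Z) ≥ 0`.  It follows from
`log t ≤ t - 1` at `t = P(x, z) P(y, z) / (P(x, y, z) P(z))`, whose expectation is at most `1`. -/
lemma ent_submod {U V W : Type} [Fintype U] [Fintype V] [Fintype W] (hp0 : ∀ ω, 0 ≤ p ω)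
    (hp1 : ∑ ω, p ω = 1) (X : Ω → U) (Y : Ω → V) (Z : Ω → W) :
    ent p (fun ω => (X ω, Y ω, Z ω)) + ent p Z
      ≤ ent p (fun ω => (X ω, Z ω)) + ent p (fun ω => (Y ω, Z ω)) := by
  set a : U → W → ℝ := fun x z => prb p {ω | X ω = x ∧ Z ω = z} with ha
  set b : V → W → ℝ := fun y z => prb p {ω | Y ω = y ∧ Z ω = z} with hb
  set c : U → V → W → ℝ := fun x y z => prb p {ω | X ω = x ∧ Y ω = y ∧ Z ω = z} with hc
  set d : W → ℝ := fun z => prb p {ω | Z ω = z} with hd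
  have ha0 : ∀ x z, 0 ≤ a x z := fun x z => prb_nonneg hp0 _
  have hb0 : ∀ y z, 0 ≤ b y z := fun x z => prb_nonneg hp0 _
  have hc0 : ∀ x y z, 0 ≤ c x y z := fun x y z => prb_nonneg hp0 _
  have hd0 : ∀ z, 0 ≤ d z := fun z => prb_nonneg hp0 _
  have hexp : ∑ ω, p ω * (a (X ω) (Z ω) * b (Y ω) (Z ω) /
      (c (X ω) (Y ω) (Z ω) * d (Z ω))) ≤ 1 := by
    rw [sum_comp (fun ω => (X ω, Y ω, Z ω))
      (fun v => a v.1 v.2.2 * b v.2.1 v.2.2 / (c v.1 v.2.1 v.2.2 * d v.2.2))]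
    calc _ ≤ ∑ v : U × V × W, a v.1 v.2.2 * b v.2.1 v.2.2 / d v.2.2 := by
            refine Finset.sum_le_sum fun v _ => ?_
            obtain ⟨x, y, z⟩ := v
            simp only [Prod.mk.injEq]
            change c x y z * _ ≤ _
            rcases (hc0 x y z).eq_or_lt with h0 | h0
            · rw [← h0, zero_mul]
              exact div_nonneg (mul_nonneg (ha0 _ _) (hb0 _ _)) (hd0 _)
            · apply le_of_eq
              rw [← mul_div_assoc, mul_div_mul_left _ _ h0.ne']
      _ = ∑ z, d z * d z / d z := by
            rw [Fintype.sum_prod_type]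
            simp_rw [Fintype.sum_prod_type]
            have e1 : ∀ z, ∑ x, a x z = d z := fun z => sum_prb_inter X {ω | Z ω = z}
            have e2 : ∀ z, ∑ y, b y z = d z := fun z => sum_prb_inter Y {ω | Z ω = z}
            calc _ = ∑ x, ∑ z, ∑ y, a x z * b y z / d z :=
                  Finset.sum_congr rfl fun x _ => Finset.sum_comm
              _ = ∑ x, ∑ z, a x z * d z / d z := by
                  simp_rw [← Finset.sum_div, ← Finset.mul_sum, e2]
              _ = ∑ z, ∑ x, a x z * d z / d z := Finset.sum_comm
              _ = _ := by simp_rw [← Finset.sum_div, ← Finset.sum_mul, e1]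
      _ = ∑ z, d z := by simp_rw [mul_self_div_self]
      _ = 1 := sum_prb hp1 Z
      _ ≤ 1 := le_rfl
  have hpt : ∀ ω, p ω * Real.logb 2 (a (X ω) (Z ω)) + p ω * Real.logb 2 (b (Y ω) (Z ω))
      - p ω * Real.logb 2 (c (X ω) (Y ω) (Z ω)) - p ω * Real.logb 2 (d (Z ω))
      ≤ (p ω * (a (X ω) (Z ω) * b (Y ω) (Z ω) /
      (c (X ω) (Y ω) (Z ω) * d (Z ω))) - p ω) / Real.log 2 := by
    intro ω
    rcases (hp0 ω).eq_or_lt with h0 | h0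
    · simp [← h0]
    have pa : 0 < a (X ω) (Z ω) := prb_pos hp0 (by simp) h0
    have pb : 0 < b (Y ω) (Z ω) := prb_pos hp0 (by simp) h0
    have pc : 0 < c (X ω) (Y ω) (Z ω) := prb_pos hp0 (by simp) h0
    have pd : 0 < d (Z ω) := prb_pos hp0 (by simp) h0
    have hl := Real.log_le_sub_one_of_pos (div_pos (mul_pos pa pb) (mul_pos pc pd))
    rw [Real.log_div (mul_pos pa pb).ne' (mul_pos pc pd).ne', Real.log_mul pa.ne' pb.ne',
      Real.log_mul pc.ne' pd.ne'] at hl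
    have l2 : 0 < Real.log 2 := Real.log_pos one_lt_two
    rw [le_div_iff₀ l2]
    simp only [Real.logb]
    have := mul_le_mul_of_nonneg_left hl h0.le
    field_simp at this ⊢
    linarith
  have hsum := Finset.sum_le_sum fun ω (_ : ω ∈ Finset.univ) => hpt ω
  rw [← Finset.sum_div, Finset.sum_sub_distrib (f := fun ω => p ω * (_ / _)), hp1] at hsum
  have hr := hsum.trans (div_nonpos_of_nonpos_of_nonneg (sub_nonpos.2 hexp)
    (Real.log_pos one_lt_two).le)
  rw [Finset.sum_sub_distrib, Finset.sum_sub_distrib, Finset.sum_add_distrib] at hr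
  rw [ent_eq, ent_eq, ent_eq, ent_eq]
  simp only [Prod.mk.injEq]
  linarith

end Helpers

/-- For a submodular `h` with `h ∅ = 0`, the marginals relative to a fixed `A` satisfy
`∑_{a ∈ s} (h A - h (A \ a)) ≤ h s` for `s ⊆ A`; submodularity is only used in the form
of diminishing marginals. -/
lemma sum_marginal_le {ι : Type} [DecidableEq ι] (h : Finset ι → ℝ) (h0 : h ∅ = 0) (A : Finset ι)
    (hsub : ∀ a ∈ A, ∀ s ⊆ A.erase a, h A + h s ≤ h (insert a s) + h (A.erase a))
    (s : Finset ι) (hs : s ⊆ A) : ∑ a ∈ s, (h A - h (A.erase a)) ≤ h s := by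
  induction s using Finset.induction_on with
  | empty => simp [h0]
  | insert a s ha ih =>
    rw [Finset.sum_insert ha]
    have hs' : s ⊆ A := (Finset.subset_insert a s).trans hs
    have := hsub a (hs (Finset.mem_insert_self a s)) s (Finset.subset_erase.2 ⟨hs', ha⟩)
    linarith [ih hs']

/-- Every `A` contains a subset `S` of each size `1 ≤ z ≤ |A|` with `h A / |A| ≤ h S / z`: delete
repeatedly an element whose marginal is at most the average `h A / |A|`. -/
lemma exists_subset_ratio {ι : Type} [DecidableEq ι] (h : Finset ι → ℝ) (h0 : h ∅ = 0)
    (hsub : ∀ A : Finset ι, ∀ a ∈ A, ∀ s ⊆ A.erase a,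
      h A + h s ≤ h (insert a s) + h (A.erase a))
    {z : ℕ} (hz : 1 ≤ z) (k : ℕ) (A : Finset ι) (hA : A.card = z + k) :
    ∃ S ⊆ A, S.card = z ∧ (z : ℝ) * h A ≤ ((z : ℝ) + k) * h S := by
  induction k generalizing A with
  | zero => exact ⟨A, subset_rfl, by simpa using hA, by simp⟩
  | succ k ih =>
    have hne : A.Nonempty := Finset.card_pos.1 (by omega)
    obtain ⟨a, ha, hle⟩ : ∃ a ∈ A, (A.card : ℝ) * (h A - h (A.erase a)) ≤ h A := by
      by_contra! hcon
      have hlt := Finset.sum_lt_sum_of_nonempty hne hcon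
      rw [← Finset.mul_sum, Finset.sum_const, nsmul_eq_mul] at hlt
      have := sum_marginal_le h h0 A (hsub A) A subset_rfl
      nlinarith [mul_le_mul_of_nonneg_left this (Nat.cast_nonneg (α := ℝ) A.card)]
    obtain ⟨S, hS, hcard, hr⟩ := ih (A.erase a) (by rw [Finset.card_erase_of_mem ha]; omega)
    refine ⟨S, hS.trans (Finset.erase_subset _ _), hcard, ?_⟩
    rw [hA] at hle
    push_cast at hle ⊢
    have hz' : (1 : ℝ) ≤ z := by exact_mod_cast hz
    have hk : (0 : ℝ) ≤ k := Nat.cast_nonneg k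
    have hpos : (0 : ℝ) < z + k := by linarith
    refine le_of_mul_le_mul_left ?_ hpos
    calc ((z : ℝ) + k) * (z * h A) ≤ z * ((z + (k + 1)) * h (A.erase a)) := by nlinarith
      _ ≤ (z + k) * ((z + (k + 1)) * h S) := by nlinarith

/-- Under recoverability and `(α, z)`-privacy (no leakage symmetry),
the local randomness `R` at the encoder (independent of `F`, with every share a
deterministic function of `(F, R)`) satisfies
`ρ = H(R) ≥ (max(0, z - τ·α) / (τ - z)) · H(F)`. -/
theorem local_randomness_lower_bound
    {Ω : Type} [Fintype Ω] (p : Ω → ℝ)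
    (hp0 : ∀ ω, 0 ≤ p ω) (hp1 : ∑ ω, p ω = 1)
    {T : ℕ} (hT : 2 ≤ T) {τ z : ℕ} (hτ1 : 1 ≤ τ) (hτT : τ ≤ T)
    (hz1 : 1 ≤ z) (hzτ : z < τ)
    {α : ℝ} (hα0 : 0 ≤ α) (hα1 : α ≤ 1)
    {𝔽 : Type} [Fintype 𝔽] (F : Ω → 𝔽) (hF : 0 < ent p F)
    {ℛ : Type} [Fintype ℛ] (R : Ω → ℛ) (ρ : ℝ) (hρ : ent p R = ρ)
    (hind : ∀ (f : 𝔽) (r : ℛ), prb p {ω | F ω = f ∧ R ω = r} =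
      prb p {ω | F ω = f} * prb p {ω | R ω = r})
    {χ : Fin T → Type} [∀ t, Fintype (χ t)] (M : ∀ t, Ω → χ t)
    (hdet : ∀ t : Fin T, ∃ g : 𝔽 → ℛ → χ t, ∀ ω, M t ω = g (F ω) (R ω))
    (hrec : ∀ S : Finset (Fin T), τ ≤ S.card → condEnt p F (shares M S) = 0)
    (hpriv : ∀ S : Finset (Fin T), S.Nonempty → S.card ≤ z →
      mutInf p F (shares M S) ≤ α * ent p F) :
    ρ ≥ (max 0 ((z : ℝ) - (τ : ℝ) * α) / ((τ : ℝ) - (z : ℝ))) * ent p F := by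
  have hent := ent_indep hp0 F R hind
  obtain ⟨A, -, hA⟩ := Finset.exists_subset_card_eq (s := (Finset.univ : Finset (Fin T)))
    (n := τ) (by simpa using hτT)
  obtain ⟨S, hSA, hS, hratio⟩ := exists_subset_ratio (fun S => ent p (shares M S))
    (ent_const hp1 _ fun _ _ => funext fun t => absurd t.2 (Finset.notMem_empty _))
    (by
      intro A a ha s hs
      have hsub := ent_submod hp0 hp1 (M a) (shares M (A.erase a)) (shares M s)
      have e1 : ent p (fun ω => (M a ω, shares M (A.erase a) ω, shares M s ω))
          = ent p (shares M A) := by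
        refine ent_congr hp0 _ _ fun ω ω' => ?_
        simp only [Prod.mk.injEq, funext_iff, shares, Subtype.forall]
        constructor
        · rintro ⟨h1, h2, -⟩ t ht
          by_cases hta : t = a
          · subst hta; exact h1
          · exact h2 t (Finset.mem_erase.2 ⟨hta, ht⟩)
        · exact fun h => ⟨h a ha, fun t ht => h t (Finset.mem_of_mem_erase ht),
            fun t ht => h t (Finset.mem_of_mem_erase (hs ht))⟩
      have e2 : ent p (fun ω => (M a ω, shares M s ω)) = ent p (shares M (insert a s)) := by
        refine ent_congr hp0 _ _ fun ω ω' => ?_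
        simp only [Prod.mk.injEq, funext_iff, shares, Subtype.forall, Finset.forall_mem_insert]
      have e3 : ent p (fun ω => (shares M (A.erase a) ω, shares M s ω))
          = ent p (shares M (A.erase a)) := by
        refine ent_congr hp0 _ _ fun ω ω' => ?_
        simp only [Prod.mk.injEq, funext_iff, shares, Subtype.forall]
        exact ⟨fun h => h.1, fun h => ⟨h, fun t ht => h t (hs ht)⟩⟩
      rw [e1, e2, e3] at hsub
      exact hsub) hz1 (τ - z) A (by omega)
  have hrecA := hrec A hA.ge
  have hprivS := hpriv S (Finset.card_pos.1 (by omega)) hS.le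
  unfold condEnt at hrecA
  unfold mutInf at hprivS
  have h1 : ent p (fun ω => (F ω, shares M A ω)) ≤ ent p (fun ω => (F ω, R ω)) := by
    refine ent_le hp0 _ _ fun ω ω' h => ?_
    obtain ⟨hf, hr⟩ := Prod.mk.inj h
    refine Prod.ext hf (funext fun t => ?_)
    obtain ⟨g, hg⟩ := hdet t.1
    simp only [shares, hg, hf, hr]
  have h2 : ent p (fun ω => (F ω, shares M S ω)) ≤ ent p (fun ω => (F ω, shares M A ω)) := by
    refine ent_le hp0 _ _ fun ω ω' h => ?_
    obtain ⟨hf, hr⟩ := Prod.mk.inj h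
    exact Prod.ext hf (funext fun t => congrFun hr ⟨t.1, hSA t.2⟩)
  have hτz : (0 : ℝ) < (τ : ℝ) - z := sub_pos.2 (by exact_mod_cast hzτ)
  rw [Nat.cast_sub hzτ.le, add_sub_cancel] at hratio
  have hρ0 : 0 ≤ ρ := hρ ▸ ent_nonneg hp0 hp1 R
  rw [ge_iff_le, div_mul_eq_mul_div, div_le_iff₀ hτz]
  rcases le_total ((z : ℝ) - τ * α) 0 with hneg | hpos
  · rw [max_eq_left hneg, zero_mul]
    exact mul_nonneg hρ0 hτz.le
  · rw [max_eq_right hpos]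
    have hgap : (1 - α) * ent p F ≤ ent p (shares M A) - ent p (shares M S) := by linarith
    have hup : ent p (shares M A) ≤ ent p F + ρ := by linarith
    have hτ0 : (0 : ℝ) ≤ τ := Nat.cast_nonneg τ
    have e1 := mul_le_mul_of_nonneg_left hgap hτ0
    have e2 := mul_le_mul_of_nonneg_left hup hτz.le
    nlinarith


end
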